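/- Let W ⊆ ℝ² be a simple polygon with free space F, and let x and y be distinct points lying in the same connected component of F with dist(x, y) < 2. Then there exists a continuous path π : [0,1] → ℝ² with π(0) = x and π(1) = y whose image is contained in F ∩ D₂(x) ∩ D₂(y). -/

import Mathlib

open Metric Set

noncomputable section

/-- The Euclidean plane ℝ². -/
abbrev Plane : Type := EuclideanSpace ℝ (Fin 2)

/-- A simple polygon, given by a simple (injective) closed polygonal curve in the plane. -/
structure SimplePolygon where
  /-- the parametrization of the boundary curve over `[0,1]` -/
  toFun : ℝ → Plane
  continuous : Continuous toFun
  closed : toFun 0 = toFun 1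
  injOn : Set.InjOn toFun (Set.Ico (0 : ℝ) 1)
  /-- the curve is polygonal: it is affine on each piece of some finite partition of `[0,1]` -/
  polygonal : ∃ (n : ℕ) (t : Fin (n + 1) → ℝ),
    t 0 = 0 ∧ t (Fin.last n) = 1 ∧ StrictMono t ∧
    ∀ i : Fin n, ∀ s ∈ Set.Icc (t i.castSucc) (t i.succ),
      toFun s = toFun (t i.castSucc) +
        ((s - t i.castSucc) / (t i.succ - t i.castSucc)) •
          (toFun (t i.succ) - toFun (t i.castSucc))

/-- The boundary curve of a simple polygon, as a subset of the plane. -/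
def SimplePolygon.bdryCurve (P : SimplePolygon) : Set Plane :=
  P.toFun '' Set.Icc 0 1

/-- The closed region bounded by a simple polygon: the union of the boundary curve with
the bounded connected components of its complement. -/
def SimplePolygon.region (P : SimplePolygon) : Set Plane :=
  P.bdryCurve ∪
    {x | x ∉ P.bdryCurve ∧ Bornology.IsBounded (connectedComponentIn P.bdryCurveᶜ x)}

/-- The free space of a simple polygon: all positions whose open unit disc lies in the region. -/
def SimplePolygon.freeSpace (P : SimplePolygon) : Set Plane :=
  {x | Metric.ball x 1 ⊆ P.region}

/-!
Let `U` be the exterior of the polygon. It is connected, being the union of the unbounded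
components of the complement of a bounded curve, and a point is free when its open unit disc misses
`U`. Put `x` and `y` on the real axis and push each point of the segment between them up to the
envelope of the unit discs centred at points of `U` below the axis, and down to the envelope of
those centred above. The two are never needed over the same point: otherwise `U` together with a
crossing of the segment inside the unit discs about points of `U` would separate `x` from `y`,
since `(w - x) / (w - y)` has no continuous logarithm on this union, whereas it has one on any
closed set avoiding a connected set that contains `x` and `y`. Finally, the pushed points stay
within distance `dist x y` of both ends, because `x` and `y` themselves lie outside the discs.
-/

section Thickening

variable {α β : Type*} [PseudoMetricSpace α] [PseudoMetricSpace β]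

theorem mem_compl_thickening_iff {r : ℝ} {s : Set α} {z : α} :
    z ∈ (thickening r s)ᶜ ↔ ∀ u ∈ s, r ≤ dist z u := by
  simp [mem_thickening_iff]

theorem image_thickening_isometryEquiv (T : α ≃ᵢ β) (r : ℝ) (s : Set α) :
    T '' thickening r s = thickening r (T '' s) := by
  ext z
  rw [← T.coe_toEquiv, T.toEquiv.image_eq_preimage_symm, mem_preimage, mem_thickening_iff,
    mem_thickening_iff]
  simp [← T.dist_eq]

theorem image_compl_thickening_isometryEquiv (T : α ≃ᵢ β) (r : ℝ) (s : Set α) :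
    T '' (thickening r s)ᶜ = (thickening r (T '' s))ᶜ := by
  rw [image_compl_eq T.bijective, image_thickening_isometryEquiv]

theorem map_mem_connectedComponentIn_compl_thickening (T : α ≃ᵢ β) {r : ℝ} {s : Set α} {x y : α}
    (hy : y ∈ connectedComponentIn (thickening r s)ᶜ x) :
    T y ∈ connectedComponentIn (thickening r (T '' s))ᶜ (T x) := by
  have hx := connectedComponentIn_nonempty_iff.1 ⟨y, hy⟩
  have himage := T.toHomeomorph.image_connectedComponentIn hx
  rw [T.coe_toHomeomorph, image_compl_thickening_isometryEquiv] at himage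
  exact himage ▸ mem_image_of_mem T hy

theorem image_compl_thickening_inter_closedBall_isometryEquiv (T : α ≃ᵢ β) (r ρ : ℝ)
    (s : Set α) (x y : α) :
    T '' ((thickening r s)ᶜ ∩ closedBall x ρ ∩ closedBall y ρ) =
      (thickening r (T '' s))ᶜ ∩ closedBall (T x) ρ ∩ closedBall (T y) ρ := by
  rw [image_inter T.injective, image_inter T.injective, image_compl_thickening_isometryEquiv,
    T.image_closedBall, T.image_closedBall]

end Thickening

section ContinuousLogarithms

theorem sub_eq_sub_of_exp_eq {α : Type*} [TopologicalSpace α] {S : Set α} (hS : IsPreconnected S)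
    {g h : α → ℂ} (hg : ContinuousOn g S) (hh : ContinuousOn h S)
    (hexp : ∀ w ∈ S, Complex.exp (g w) = Complex.exp (h w)) {b c : α} (hb : b ∈ S) (hc : c ∈ S) :
    g b - h b = g c - h c := by
  have hshift : EqOn g (fun w => h w + (g b - h b)) S := by
    refine Complex.isCoveringMap_exp.eqOn_of_comp_eqOn hS hg (hh.add continuousOn_const)
      (fun w hw => Subtype.ext ?_) hb (by ring)
    simp [Complex.exp_add, Complex.exp_sub, hexp w hw, hexp b hb]
  rw [hshift hc]
  ring

/-- If `f` had a single-valued logarithm on `A ∪ B`, going from `b` to `c` would change its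
argument equally along `A`, where `f` avoids the negative axis, and along `B`, where `f` avoids
the positive axis. -/
theorem im_nonneg_of_exp_eq_of_mem_slitPlane {α : Type*} [TopologicalSpace α] {A B : Set α}
    (hA : IsPreconnected A) (hB : IsPreconnected B) {f g : α → ℂ} (hf : ContinuousOn f (A ∪ B))
    (hg : ContinuousOn g (A ∪ B)) (hexp : ∀ w ∈ A ∪ B, Complex.exp (g w) = f w)
    (hfA : ∀ w ∈ A, f w ∈ Complex.slitPlane) (hfB : ∀ w ∈ B, -f w ∈ Complex.slitPlane)
    {b c : α} (hb : b ∈ A ∩ B) (hc : c ∈ A ∩ B) (hfb : 0 < (f b).im) : 0 ≤ (f c).im := by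
  by_contra! hfc
  have hlogA : g b - Complex.log (f b) = g c - Complex.log (f c) := by
    refine sub_eq_sub_of_exp_eq hA (hg.mono subset_union_left)
      ((hf.mono subset_union_left).clog hfA) (fun w hw => ?_) hb.1 hc.1
    rw [hexp w (Or.inl hw), Complex.exp_log (Complex.slitPlane_ne_zero (hfA w hw))]
  have hlogB : g b + Real.pi * Complex.I - Complex.log (-f b)
      = g c + Real.pi * Complex.I - Complex.log (-f c) := by
    refine sub_eq_sub_of_exp_eq hB ((hg.mono subset_union_right).add_const _)
      ((hf.mono subset_union_right).fun_neg.clog hfB) (fun w hw => ?_) hb.2 hc.2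
    rw [Complex.exp_add, Complex.exp_pi_mul_I, hexp w (Or.inr hw), mul_neg_one,
      Complex.exp_log (Complex.slitPlane_ne_zero (hfB w hw))]
  have hargA := congrArg Complex.im hlogA
  have hargB := congrArg Complex.im hlogB
  simp only [Complex.sub_im, Complex.add_im, Complex.log_im] at hargA hargB
  rw [Complex.arg_neg_eq_arg_sub_pi_of_im_pos hfb,
    Complex.arg_neg_eq_arg_add_pi_of_im_neg hfc] at hargB
  linarith [Real.pi_pos]

theorem sub_div_sub_mem_slitPlane_of_dist_lt {w z z' : ℂ} (h : dist z' z < dist w z) :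
    (w - z') / (w - z) ∈ Complex.slitPlane := by
  have hwz : w - z ≠ 0 := by
    rw [sub_ne_zero, ← dist_pos]
    exact dist_nonneg.trans_lt h
  have hsplit : (w - z') / (w - z) = 1 + (z - z') / (w - z) := by
    field_simp
    ring
  rw [hsplit]
  apply Complex.mem_slitPlane_of_norm_lt_one
  rwa [norm_div, div_lt_one (norm_pos_iff.2 hwz), ← dist_eq_norm, ← dist_eq_norm, dist_comm]

theorem exists_continuousOn_exp_eq_sub_div_sub_of_dist_lt {K : Set ℂ} {z z' : ℂ}
    (h : ∀ w ∈ K, dist z' z < dist w z) :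
    ∃ g : ℂ → ℂ, ContinuousOn g K ∧ ∀ w ∈ K, Complex.exp (g w) = (w - z) / (w - z') := by
  have hslit : ∀ w ∈ K, (w - z') / (w - z) ∈ Complex.slitPlane := fun w hw =>
    sub_div_sub_mem_slitPlane_of_dist_lt (h w hw)
  have hne : ∀ w ∈ K, w - z ≠ 0 := fun w hw =>
    sub_ne_zero.2 (dist_pos.1 (dist_nonneg.trans_lt (h w hw)))
  have hcont : ContinuousOn (fun w => (w - z') / (w - z)) K :=
    (by fun_prop : ContinuousOn (fun w : ℂ => w - z') K).div (by fun_prop) hne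
  refine ⟨fun w => -Complex.log ((w - z') / (w - z)), (hcont.clog hslit).neg, fun w hw => ?_⟩
  rw [Complex.exp_neg, Complex.exp_log (Complex.slitPlane_ne_zero (hslit w hw)), inv_div]

theorem exists_continuousOn_exp_eq_sub_div_sub {K : Set ℂ} (hK : IsClosed K) {x y : ℂ}
    (hy : y ∈ connectedComponentIn Kᶜ x) :
    ∃ g : ℂ → ℂ, ContinuousOn g K ∧ ∀ w ∈ K, Complex.exp (g w) = (w - x) / (w - y) := by
  refine isPreconnected_connectedComponentIn.induction₂ (fun x y => ∃ g : ℂ → ℂ,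
    ContinuousOn g K ∧ ∀ w ∈ K, Complex.exp (g w) = (w - x) / (w - y)) ?near ?trans ?symm
    (mem_connectedComponentIn (connectedComponentIn_nonempty_iff.1 ⟨y, hy⟩)) hy
  case near =>
    intro z hz
    obtain ⟨ε, hε, hball⟩ :=
      Metric.isOpen_iff.1 hK.isOpen_compl z (connectedComponentIn_subset _ _ hz)
    filter_upwards [mem_nhdsWithin_of_mem_nhds (ball_mem_nhds z hε)] with z' hz'
    exact exists_continuousOn_exp_eq_sub_div_sub_of_dist_lt fun w hw =>
      (mem_ball.1 hz').trans_le (not_lt.1 fun hlt => hball hlt hw)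
  case trans =>
    rintro a b c - hb - ⟨g, hg, hgexp⟩ ⟨h, hh, hhexp⟩
    refine ⟨g + h, hg.add hh, fun w hw => ?_⟩
    have hne : w - b ≠ 0 :=
      sub_ne_zero.2 fun h => connectedComponentIn_subset _ _ hb (h ▸ hw)
    rw [Pi.add_apply, Complex.exp_add, hgexp w hw, hhexp w hw]
    exact div_mul_div_cancel₀ hne
  case symm =>
    rintro a b - - ⟨g, hg, hgexp⟩
    refine ⟨-g, hg.neg, fun w hw => ?_⟩
    rw [Pi.neg_apply, Complex.exp_neg, hgexp w hw, inv_div]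

theorem exists_nonpos_ofReal_eq_of_notMem_slitPlane {z : ℂ} (hz : z ∉ Complex.slitPlane) :
    ∃ s : ℝ, s ≤ 0 ∧ z = s := by
  rw [Complex.mem_slitPlane_iff, not_or, not_lt, not_ne_iff] at hz
  exact ⟨z.re, hz.1, Complex.ext rfl hz.2⟩

theorem im_eq_zero_of_sub_ofReal_eq_mul {w : ℂ} {x y s : ℝ} (hs : s ≠ 1)
    (h : w - x = s * (w - y)) : w.im = 0 ∧ w.re - x = s * (w.re - y) := by
  have him := congrArg Complex.im h
  have hre := congrArg Complex.re h
  simp only [Complex.sub_im, Complex.sub_re, Complex.ofReal_im, Complex.ofReal_re,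
    Complex.re_ofReal_mul, Complex.im_ofReal_mul, sub_zero] at him hre
  exact ⟨(mul_eq_zero.1 (by linarith : (1 - s) * w.im = 0)).resolve_left (sub_ne_zero.2 hs.symm),
    hre⟩

theorem sub_div_sub_mem_slitPlane {w : ℂ} {x y : ℝ} (hxy : x ≤ y)
    (hw : w.im = 0 → w.re ∉ Icc x y) : (w - x) / (w - y) ∈ Complex.slitPlane := by
  have hwy : w - y ≠ 0 := fun h => by
    rw [sub_eq_zero.1 h] at hw
    exact hw (Complex.ofReal_im y) (right_mem_Icc.2 hxy)
  by_contra hslit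
  obtain ⟨s, hs, hdiv⟩ := exists_nonpos_ofReal_eq_of_notMem_slitPlane hslit
  obtain ⟨him, hre⟩ :=
    im_eq_zero_of_sub_ofReal_eq_mul (by linarith) ((div_eq_iff hwy).1 hdiv)
  exact hw him ⟨by nlinarith, by nlinarith⟩

theorem neg_sub_div_sub_mem_slitPlane {w : ℂ} {x y : ℝ} (hxy : x ≠ y)
    (hw : w.im = 0 → w.re ∈ Ioo x y) : -((w - x) / (w - y)) ∈ Complex.slitPlane := by
  have hwy : w - y ≠ 0 := fun h => by
    rw [sub_eq_zero.1 h] at hw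
    exact (hw (Complex.ofReal_im y)).2.false
  by_contra hslit
  obtain ⟨s, hs, hdiv⟩ := exists_nonpos_ofReal_eq_of_notMem_slitPlane hslit
  have hmul : w - x = (-s : ℝ) * (w - y) := by
    rw [← div_eq_iff hwy, Complex.ofReal_neg, ← hdiv, neg_neg]
  have hs1 : -s ≠ 1 := by
    intro h
    rw [h, Complex.ofReal_one, one_mul, sub_right_inj, Complex.ofReal_inj] at hmul
    exact hxy hmul
  obtain ⟨him, hre⟩ := im_eq_zero_of_sub_ofReal_eq_mul hs1 hmul
  obtain ⟨hx, hy⟩ := hw him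
  nlinarith

theorem im_sub_div_sub (w : ℂ) (x y : ℝ) :
    ((w - x) / (w - y)).im = (x - y) * w.im / Complex.normSq (w - y) := by
  simp only [Complex.div_im, Complex.sub_im, Complex.sub_re, Complex.ofReal_im,
    Complex.ofReal_re, sub_zero]
  ring

theorem notMem_connectedComponentIn_compl_union {A B : Set ℂ} (hA : IsClosed A) (hB : IsClosed B)
    (hAconn : IsPreconnected A) (hBconn : IsPreconnected B) {x y : ℝ} (hxy : x < y)
    (hAxy : ∀ w ∈ A, w.im = 0 → w.re ∉ Icc x y) (hBxy : ∀ w ∈ B, w.im = 0 → w.re ∈ Ioo x y)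
    {b c : ℂ} (hb : b ∈ A ∩ B) (hc : c ∈ A ∩ B) (hbim : b.im < 0) (hcim : 0 < c.im) :
    (y : ℂ) ∉ connectedComponentIn (A ∪ B)ᶜ x := by
  intro hy
  have hne : ∀ w ∈ A ∪ B, w - y ≠ 0 := fun w hw =>
    sub_ne_zero.2 fun h => connectedComponentIn_subset _ _ hy (h ▸ hw)
  obtain ⟨g, hg, hgexp⟩ := exists_continuousOn_exp_eq_sub_div_sub (hA.union hB) hy
  have hcont : ContinuousOn (fun w : ℂ => (w - x) / (w - y)) (A ∪ B) :=
    (by fun_prop : ContinuousOn (fun w : ℂ => w - x) (A ∪ B)).div (by fun_prop) hne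
  have hbpos : 0 < ((b - x) / (b - y)).im := by
    rw [im_sub_div_sub]
    exact div_pos (by nlinarith) (Complex.normSq_pos.2 (hne b (Or.inl hb.1)))
  have hcneg : ((c - x) / (c - y)).im < 0 := by
    rw [im_sub_div_sub]
    exact div_neg_of_neg_of_pos (by nlinarith) (Complex.normSq_pos.2 (hne c (Or.inl hc.1)))
  exact hcneg.not_ge <| im_nonneg_of_exp_eq_of_mem_slitPlane hAconn hBconn hcont hg hgexp
    (fun w hw => sub_div_sub_mem_slitPlane hxy.le (hAxy w hw))
    (fun w hw => neg_sub_div_sub_mem_slitPlane hxy.ne (hBxy w hw)) hb hc hbpos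

end ContinuousLogarithms

section BlockingObstacles

theorem eq_right_of_mem_segment_of_map_eq_zero {E : Type*} [AddCommGroup E] [Module ℝ E]
    (f : E →ₗ[ℝ] ℝ) {v q w : E} (hv : 0 < f v) (hq : 0 ≤ f q) (hw : w ∈ segment ℝ v q)
    (hfw : f w = 0) : w = q := by
  obtain ⟨a, b, ha, hb, hab, rfl⟩ := hw
  rw [map_add, map_smul, map_smul, smul_eq_mul, smul_eq_mul] at hfw
  obtain rfl : a = 0 := by
    have := mul_nonneg ha hv.le
    have := mul_nonneg hb hq
    exact (mul_eq_zero.1 (by linarith : a * f v = 0)).resolve_right hv.ne'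
  rw [zero_smul, zero_add, (by linarith : b = 1), one_smul]

theorem dist_lt_iff_sq_add_sq_lt {r : ℝ} (hr : 0 < r) {z w : ℂ} :
    dist z w < r ↔ (z.re - w.re) ^ 2 + (z.im - w.im) ^ 2 < r ^ 2 := by
  rw [Complex.dist_eq_re_im, Real.sqrt_lt' hr]

theorem dist_lt_of_sq_im_sub_le {r : ℝ} {z w u : ℂ} (hre : z.re = w.re)
    (him : (z.im - u.im) ^ 2 ≤ (w.im - u.im) ^ 2) (h : dist w u < r) : dist z u < r := by
  have hr := dist_nonneg.trans_lt h
  rw [dist_lt_iff_sq_add_sq_lt hr] at h ⊢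
  rw [hre]
  linarith

variable {r x y : ℝ} {q u : ℂ}

theorem dist_re_lt_abs_sub_re {z : ℝ} (hq : 0 ≤ q.im) (hu : u.im ≤ 0) (hqu : dist q u < r)
    (hzu : r ≤ dist (z : ℂ) u) : dist q u.re < |z - u.re| := by
  have hr := dist_nonneg.trans_lt hqu
  rw [← not_lt, dist_lt_iff_sq_add_sq_lt hr] at hzu
  rw [dist_lt_iff_sq_add_sq_lt hr] at hqu
  simp only [Complex.ofReal_re, Complex.ofReal_im, zero_sub, neg_sq] at hzu
  rw [Complex.dist_eq_re_im, ← Real.sqrt_sq_eq_abs]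
  apply Real.sqrt_lt_sqrt (by positivity)
  simp only [Complex.ofReal_re, Complex.ofReal_im, sub_zero]
  nlinarith [mul_nonneg hq (neg_nonneg.2 hu)]

theorem re_mem_Ioo_of_dist_lt (hqre : q.re ∈ Icc x y) (hq : 0 ≤ q.im) (hu : u.im ≤ 0)
    (hqu : dist q u < r) (hxu : r ≤ dist (x : ℂ) u) (hyu : r ≤ dist (y : ℂ) u) :
    u.re ∈ Ioo x y := by
  have hre : |q.re - u.re| ≤ dist q u.re := by
    simpa [dist_eq_norm] using Complex.abs_re_le_norm (q - u.re)
  have hx := hre.trans_lt (dist_re_lt_abs_sub_re hq hu hqu hxu)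
  have hy := hre.trans_lt (dist_re_lt_abs_sub_re hq hu hqu hyu)
  obtain ⟨hxq, hqy⟩ := hqre
  constructor
  · by_contra! h
    rw [abs_of_nonneg (by linarith), abs_of_nonneg (by linarith)] at hx
    linarith
  · by_contra! h
    rw [abs_of_nonpos (by linarith), abs_of_nonpos (by linarith)] at hy
    linarith

theorem mem_closedBall_inter_of_dist_lt (hqre : q.re ∈ Icc x y) (hq : 0 ≤ q.im) (hu : u.im ≤ 0)
    (hqu : dist q u < r) (hxu : r ≤ dist (x : ℂ) u) (hyu : r ≤ dist (y : ℂ) u) :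
    q ∈ closedBall (x : ℂ) (y - x) ∩ closedBall (y : ℂ) (y - x) := by
  obtain ⟨hx, hy⟩ := re_mem_Ioo_of_dist_lt hqre hq hu hqu hxu hyu
  have hqx := dist_re_lt_abs_sub_re hq hu hqu hxu
  have hqy := dist_re_lt_abs_sub_re hq hu hqu hyu
  have hux : dist (u.re : ℂ) x = u.re - x := by
    rw [Complex.dist_of_im_eq (by simp)]
    simp [Real.dist_eq, abs_of_pos (sub_pos.2 hx)]
  have huy : dist (u.re : ℂ) y = y - u.re := by
    rw [dist_comm, Complex.dist_of_im_eq (by simp)]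
    simp [Real.dist_eq, abs_of_pos (sub_pos.2 hy)]
  rw [abs_sub_comm, abs_of_pos (sub_pos.2 hx)] at hqx
  rw [abs_of_pos (sub_pos.2 hy)] at hqy
  rw [mem_inter_iff, mem_closedBall, mem_closedBall]
  constructor
  · linarith [dist_triangle q u.re x]
  · linarith [dist_triangle q u.re y]

theorem re_notMem_Icc_of_le_dist (hxy : y - x < 2 * r) (hu : u.im = 0)
    (hxu : r ≤ dist (x : ℂ) u) (hyu : r ≤ dist (y : ℂ) u) : u.re ∉ Icc x y := by
  rintro ⟨hx, hy⟩
  rw [Complex.dist_of_im_eq (by simp [hu]), Complex.ofReal_re, Real.dist_eq, abs_sub_comm,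
    abs_of_nonneg (by linarith)] at hxu
  rw [Complex.dist_of_im_eq (by simp [hu]), Complex.ofReal_re, Real.dist_eq,
    abs_of_nonneg (by linarith)] at hyu
  linarith

theorem le_dist_of_im_eq_zero (hxy : y - x < 2 * r) (hqre : q.re ∈ Icc x y) (hq : 0 ≤ q.im)
    (hu : u.im = 0) (hxu : r ≤ dist (x : ℂ) u) (hyu : r ≤ dist (y : ℂ) u) : r ≤ dist q u := by
  by_contra! hqu
  exact re_notMem_Icc_of_le_dist hxy hu hxu hyu
    (Ioo_subset_Icc_self (re_mem_Ioo_of_dist_lt hqre hq hu.le hqu hxu hyu))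

/-- The connection runs from `u` to the foot of `q` on the real axis, up to `q`, and on to `v`. -/
theorem exists_isPreconnected_crossing {v : ℂ} (hq : 0 ≤ q.im) (hu : u.im < 0) (hv : 0 < v.im)
    (hqu : dist q u < r) (hqv : dist q v < r) :
    ∃ B : Set ℂ, IsClosed B ∧ IsPreconnected B ∧ u ∈ B ∧ v ∈ B ∧ (q.re : ℂ) ∈ ball u r ∧
      B ⊆ ball u r ∪ ball v r ∧ ∀ w ∈ B, w.im = 0 → w.re = q.re := by
  have hr : 0 < r := dist_nonneg.trans_lt hqu
  have hfoot : (q.re : ℂ) ∈ ball u r :=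
    dist_lt_of_sq_im_sub_le (Complex.ofReal_re _) (by rw [Complex.ofReal_im]; nlinarith) hqu
  have hclosed : ∀ a b : ℂ, IsClosed (segment ℝ a b) := fun a b => by
    rw [segment_eq_image_lineMap]
    exact (isCompact_Icc.image AffineMap.lineMap_continuous).isClosed
  have hconn : ∀ a b : ℂ, IsPreconnected (segment ℝ a b) := fun a b =>
    (convex_segment a b).isPreconnected
  refine ⟨segment ℝ u q.re ∪ segment ℝ q.re q ∪ segment ℝ v q,
    ((hclosed _ _).union (hclosed _ _)).union (hclosed _ _),
    ((hconn _ _).union _ (right_mem_segment ℝ _ _) (left_mem_segment ℝ _ _) (hconn _ _)).union q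
      (Or.inr (right_mem_segment ℝ _ _)) (right_mem_segment ℝ _ _) (hconn _ _),
    Or.inl (Or.inl (left_mem_segment ℝ _ _)), Or.inr (left_mem_segment ℝ _ _), hfoot,
    union_subset (union_subset ?_ ?_ |>.trans subset_union_left) (.trans ?_ subset_union_right),
    ?_⟩
  · exact (convex_ball u r).segment_subset (mem_ball_self hr) hfoot
  · exact (convex_ball u r).segment_subset hfoot hqu
  · exact (convex_ball v r).segment_subset (mem_ball_self hr) hqv
  · rintro w ((hw | hw) | hw) hw0
    · rw [eq_right_of_mem_segment_of_map_eq_zero (-Complex.imLm) (by simpa using hu) (by simp) hw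
        (by simpa using hw0), Complex.ofReal_re]
    · obtain ⟨a, b, -, -, hab, rfl⟩ := hw
      simp [← add_mul, hab]
    · rw [eq_right_of_mem_segment_of_map_eq_zero Complex.imLm hv hq hw hw0]

theorem le_dist_of_dist_lt_of_im_neg {U : Set ℂ} (hUclosed : IsClosed U) (hU : IsPreconnected U)
    (hyr : y - x < 2 * r)
    (hy : (y : ℂ) ∈ connectedComponentIn (thickening r U)ᶜ x) (hqre : q.re ∈ Icc x y)
    (hq : 0 ≤ q.im) {v : ℂ} (huU : u ∈ U) (hvU : v ∈ U) (hu : u.im < 0) (hv : 0 < v.im)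
    (hqu : dist q u < r) : r ≤ dist q v := by
  by_contra! hqv
  have hr : 0 < r := dist_nonneg.trans_lt hqu
  have hx_free : (x : ℂ) ∈ (thickening r U)ᶜ := connectedComponentIn_nonempty_iff.1 ⟨_, hy⟩
  have hy_free : (y : ℂ) ∈ (thickening r U)ᶜ := connectedComponentIn_subset _ _ hy
  obtain ⟨B, hBclosed, hB, huB, hvB, hfoot, hBsub, hBre⟩ :=
    exists_isPreconnected_crossing hq hu hv hqu hqv
  have hball : ∀ w ∈ U, ball w r ⊆ thickening r U := fun w hw => ball_subset_thickening hw r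
  have hqx : q.re ≠ x := fun h => hx_free (hball u huU (h ▸ hfoot))
  have hqy : q.re ≠ y := fun h => hy_free (hball u huU (h ▸ hfoot))
  have hqIoo : q.re ∈ Ioo x y := ⟨hqre.1.lt_of_ne hqx.symm, hqre.2.lt_of_ne hqy⟩
  have hUB : U ∪ B ⊆ thickening r U :=
    union_subset (self_subset_thickening hr U)
      (hBsub.trans (union_subset (hball u huU) (hball v hvU)))
  refine notMem_connectedComponentIn_compl_union hUclosed hBclosed hU hB
    (hqIoo.1.trans hqIoo.2) (fun w hw hw0 => ?_) (fun w hw hw0 => hBre w hw hw0 ▸ hqIoo)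
    ⟨huU, huB⟩ ⟨hvU, hvB⟩ hu hv
    (connectedComponentIn_mono _ (compl_subset_compl.2 hUB) hy)
  exact re_notMem_Icc_of_le_dist hyr hw0 (mem_compl_thickening_iff.1 hx_free w hw)
    (mem_compl_thickening_iff.1 hy_free w hw)

end BlockingObstacles

section Envelope

theorem continuous_ciSup_of_equicontinuous {X ι : Type*} [TopologicalSpace X] {F : ι → X → ℝ}
    (hF : Equicontinuous F) (hbdd : ∀ x, BddAbove (range (F · x))) :
    Continuous fun x => ⨆ i, F i x := by
  cases isEmpty_or_nonempty ι
  · simpa only [Real.iSup_of_isEmpty] using continuous_const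
  refine continuous_iff_continuousAt.2 fun x₀ => Metric.tendsto_nhds.2 fun ε hε => ?_
  filter_upwards [Metric.equicontinuousAt_iff_right.1 (hF x₀) (ε / 2) (half_pos hε)] with x hx
  have hle : ∀ {a b : X}, (∀ i, dist (F i a) (F i b) < ε / 2) →
      ⨆ i, F i a ≤ (⨆ i, F i b) + ε / 2 := fun {a b} hab => ciSup_le fun i => by
    linarith [le_ciSup (hbdd b) i, (abs_lt.1 (Real.dist_eq _ _ ▸ hab i)).2]
  rw [Real.dist_eq, abs_lt]
  constructor <;> linarith [hle hx, hle fun i => dist_comm (F i x₀) (F i x) ▸ hx i]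

theorem uniformContinuous_sqrt_sub_sq (r : ℝ) :
    UniformContinuous fun t : ℝ => √(r ^ 2 - t ^ 2) := by
  refine HasCompactSupport.uniformContinuous_of_continuous
    (.of_support_subset_isCompact (isCompact_closedBall 0 |r|) fun t ht => ?_) (by fun_prop)
  rw [mem_closedBall_zero_iff, Real.norm_eq_abs, ← sq_le_sq]
  exact (sub_pos.1 (Real.sqrt_ne_zero'.1 ht)).le

/-- The height at abscissa `t` of the part of the disc of radius `r` about `b` lying above the
real axis, or `0` if there is none. Where the vertical line at `t` misses the disc, the square
root vanishes, so that the value is `0` as intended when `b` lies below the axis. -/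
def capHeight (r : ℝ) (b : ℂ) (t : ℝ) : ℝ :=
  max 0 (√(r ^ 2 - (t - b.re) ^ 2) + b.im)

theorem uniformEquicontinuous_capHeight (r : ℝ) : UniformEquicontinuous (capHeight r) := by
  rw [Metric.uniformEquicontinuous_iff]
  intro ε hε
  obtain ⟨δ, hδ, h⟩ := Metric.uniformContinuous_iff.1 (uniformContinuous_sqrt_sub_sq r) ε hε
  refine ⟨δ, hδ, fun s t hst b => ?_⟩
  refine (abs_max_sub_max_le_max _ _ _ _).trans_lt (max_lt (by simpa using hε) ?_)
  rw [add_sub_add_right_eq_sub]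
  exact h (by rwa [dist_sub_right])

theorem capHeight_le {r : ℝ} {b : ℂ} (hb : b.im ≤ 0) (t : ℝ) : capHeight r b t ≤ |r| := by
  refine max_le (abs_nonneg r) ?_
  have : √(r ^ 2 - (t - b.re) ^ 2) ≤ |r| :=
    Real.sqrt_le_iff.2 ⟨abs_nonneg r, by rw [sq_abs]; linarith [sq_nonneg (t - b.re)]⟩
  linarith

theorem lt_capHeight_iff {r s t : ℝ} {b : ℂ} (hr : 0 < r) (hb : b.im ≤ 0) (hs : 0 ≤ s) :
    s < capHeight r b t ↔ dist (⟨t, s⟩ : ℂ) b < r := by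
  rw [capHeight, lt_max_iff, or_iff_right hs.not_gt, ← sub_lt_iff_lt_add,
    Real.lt_sqrt (by linarith), dist_lt_iff_sq_add_sq_lt hr, lt_sub_iff_add_lt']

/-- The upper envelope, truncated below at the real axis, of the discs of radius `r` about the
points of `U` below the axis. If there are no such points, it is `0`, the supremum of the empty
family in `ℝ`. -/
def lowerEnvelope (r : ℝ) (U : Set ℂ) (t : ℝ) : ℝ :=
  ⨆ u : {u // u ∈ U ∧ u.im < 0}, capHeight r u t

theorem lowerEnvelope_nonneg (r : ℝ) (U : Set ℂ) (t : ℝ) : 0 ≤ lowerEnvelope r U t :=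
  Real.iSup_nonneg fun _ => le_max_left _ _

theorem bddAbove_range_capHeight (r : ℝ) (U : Set ℂ) (t : ℝ) :
    BddAbove (range fun u : {u // u ∈ U ∧ u.im < 0} => capHeight r u t) :=
  ⟨|r|, forall_mem_range.2 fun u => capHeight_le u.2.2.le t⟩

theorem continuous_lowerEnvelope (r : ℝ) (U : Set ℂ) : Continuous (lowerEnvelope r U) :=
  continuous_ciSup_of_equicontinuous
    ((uniformEquicontinuous_capHeight r).equicontinuous.comp Subtype.val)
    (bddAbove_range_capHeight r U)

theorem lt_lowerEnvelope_iff {r s t : ℝ} {U : Set ℂ} (hr : 0 < r) (hs : 0 ≤ s) :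
    s < lowerEnvelope r U t ↔ ∃ u ∈ U, u.im < 0 ∧ dist (⟨t, s⟩ : ℂ) u < r := by
  constructor
  · intro h
    by_contra! hfar
    exact h.not_ge <| Real.iSup_le (fun u => not_lt.1 fun hlt =>
      (hfar u u.2.1 u.2.2).not_gt ((lt_capHeight_iff hr u.2.2.le hs).1 hlt)) hs
  · rintro ⟨u, huU, hu, hdist⟩
    exact ((lt_capHeight_iff hr hu.le hs).2 hdist).trans_le
      (le_ciSup (bddAbove_range_capHeight r U t) ⟨u, huU, hu⟩)

theorem lowerEnvelope_eq_zero {r t : ℝ} {U : Set ℂ} (hr : 0 < r)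
    (ht : (t : ℂ) ∈ (thickening r U)ᶜ) : lowerEnvelope r U t = 0 := by
  refine (lowerEnvelope_nonneg r U t).antisymm' (not_lt.1 fun hpos => ?_)
  obtain ⟨u, huU, -, hu⟩ := (lt_lowerEnvelope_iff hr le_rfl).1 hpos
  exact (mem_compl_thickening_iff.1 ht u huU).not_gt hu

theorem continuous_complex_mk {X : Type*} [TopologicalSpace X] {f g : X → ℝ} (hf : Continuous f)
    (hg : Continuous g) : Continuous fun a => (⟨f a, g a⟩ : ℂ) :=
  Complex.equivRealProdCLM.symm.continuous.comp (hf.prodMk hg)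

theorem mk_mem_of_forall_mem_Ico {G : Set ℂ} (hG : IsClosed G) {t a : ℝ} (ha : 0 < a)
    (h : ∀ s ∈ Ico 0 a, (⟨t, s⟩ : ℂ) ∈ G) : (⟨t, a⟩ : ℂ) ∈ G := by
  have hsub : Ico 0 a ⊆ (fun s => (⟨t, s⟩ : ℂ)) ⁻¹' G := h
  have := (hG.preimage (continuous_complex_mk continuous_const continuous_id)).closure_subset_iff.2
    hsub
  rw [closure_Ico ha.ne] at this
  exact this (right_mem_Icc.2 ha.le)

/-- Just below the envelope a point lies in an open disc about a lower point of `U`, so it is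
close to both endpoints and outside all discs about upper points; then pass to the limit. -/
theorem mk_lowerEnvelope_mem {U : Set ℂ} (hUclosed : IsClosed U) (hU : IsPreconnected U)
    {r x y t : ℝ} (hyr : y - x < 2 * r)
    (hy : (y : ℂ) ∈ connectedComponentIn (thickening r U)ᶜ x) (ht : t ∈ Icc x y)
    (hpos : 0 < lowerEnvelope r U t) :
    (⟨t, lowerEnvelope r U t⟩ : ℂ) ∈
      (thickening r U)ᶜ ∩ closedBall (x : ℂ) (y - x) ∩ closedBall (y : ℂ) (y - x) := by
  have hr : 0 < r := by linarith [ht.1.trans ht.2]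
  have hxfree := mem_compl_thickening_iff.1 (connectedComponentIn_nonempty_iff.1 ⟨_, hy⟩)
  have hyfree := mem_compl_thickening_iff.1 (connectedComponentIn_subset _ _ hy)
  have hlimit : (⟨t, lowerEnvelope r U t⟩ : ℂ) ∈ (thickening r (U ∩ {v | 0 < v.im}))ᶜ ∩
      (closedBall (x : ℂ) (y - x) ∩ closedBall (y : ℂ) (y - x)) := by
    refine mk_mem_of_forall_mem_Ico (isOpen_thickening.isClosed_compl.inter
      (isClosed_closedBall.inter isClosed_closedBall)) hpos fun s hs => ?_
    obtain ⟨u, huU, hu, hus⟩ := (lt_lowerEnvelope_iff hr hs.1).1 hs.2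
    refine ⟨mem_compl_thickening_iff.2 fun v hv => ?_,
      mem_closedBall_inter_of_dist_lt ht hs.1 hu.le hus (hxfree u huU) (hyfree u huU)⟩
    exact le_dist_of_dist_lt_of_im_neg hUclosed hU hyr hy ht hs.1 huU hv.1 hu hv.2 hus
  rw [inter_assoc]
  refine ⟨mem_compl_thickening_iff.2 fun u huU => ?_, hlimit.2⟩
  rcases lt_trichotomy u.im 0 with hu | hu | hu
  · exact not_lt.1 fun hlt =>
      ((lt_lowerEnvelope_iff hr hpos.le).2 ⟨u, huU, hu, hlt⟩).false
  · exact le_dist_of_im_eq_zero hyr ht hpos.le hu (hxfree u huU) (hyfree u huU)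
  · exact mem_compl_thickening_iff.1 hlimit.1 u ⟨huU, hu⟩

end Envelope

section PushedSegment

theorem lt_lowerEnvelope_image_conj_iff {r s t : ℝ} {U : Set ℂ} (hr : 0 < r) (hs : 0 ≤ s) :
    s < lowerEnvelope r (Complex.conjLIE '' U) t ↔
      ∃ v ∈ U, 0 < v.im ∧ dist (⟨t, -s⟩ : ℂ) v < r := by
  simp only [lt_lowerEnvelope_iff hr hs, exists_mem_image, Complex.conjLIE_apply, Complex.conj_im,
    neg_lt_zero, ← Complex.dist_conj_comm]
  rfl

variable {r x y t : ℝ} {U : Set ℂ}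

theorem mk_neg_lowerEnvelope_image_conj_mem (hUclosed : IsClosed U) (hU : IsPreconnected U)
    (hyr : y - x < 2 * r) (hy : (y : ℂ) ∈ connectedComponentIn (thickening r U)ᶜ x)
    (ht : t ∈ Icc x y) (hpos : 0 < lowerEnvelope r (Complex.conjLIE '' U) t) :
    (⟨t, -lowerEnvelope r (Complex.conjLIE '' U) t⟩ : ℂ) ∈
      (thickening r U)ᶜ ∩ closedBall (x : ℂ) (y - x) ∩ closedBall (y : ℂ) (y - x) := by
  let conj := Complex.conjLIE.toIsometryEquiv
  have hreal : ∀ z : ℝ, conj z = z := Complex.conj_ofReal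
  have hmem := mk_lowerEnvelope_mem (conj.toHomeomorph.isClosed_image.2 hUclosed)
    (hU.image conj conj.continuous.continuousOn) hyr
    (hreal x ▸ hreal y ▸ map_mem_connectedComponentIn_compl_thickening conj hy) ht hpos
  rw [← hreal x, ← hreal y, conj.coe_toHomeomorph,
    ← image_compl_thickening_inter_closedBall_isometryEquiv] at hmem
  obtain ⟨z, hz, hconj⟩ := hmem
  have hz_eq : z = ⟨t, -lowerEnvelope r (Complex.conjLIE '' U) t⟩ :=
    conj.injective (hconj.trans (Complex.ext rfl (neg_neg _).symm))
  exact hz_eq ▸ hz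

theorem lowerEnvelope_eq_zero_or_lowerEnvelope_image_conj_eq_zero (hUclosed : IsClosed U)
    (hU : IsPreconnected U) (hyr : y - x < 2 * r)
    (hy : (y : ℂ) ∈ connectedComponentIn (thickening r U)ᶜ x) (ht : t ∈ Icc x y) :
    lowerEnvelope r U t = 0 ∨ lowerEnvelope r (Complex.conjLIE '' U) t = 0 := by
  have hr : 0 < r := by linarith [ht.1.trans ht.2]
  by_contra! ⟨hlow, hup⟩
  obtain ⟨u, huU, hu, hut⟩ :=
    (lt_lowerEnvelope_iff hr le_rfl).1 ((lowerEnvelope_nonneg r U t).lt_of_ne' hlow)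
  obtain ⟨v, hvU, hv, hvt⟩ :=
    (lt_lowerEnvelope_image_conj_iff hr le_rfl).1 ((lowerEnvelope_nonneg r _ t).lt_of_ne' hup)
  rw [neg_zero] at hvt
  exact (le_dist_of_dist_lt_of_im_neg hUclosed hU hyr hy ht le_rfl huU hvU hu hv hut).not_gt hvt

theorem ofReal_mem_of_lowerEnvelope_eq_zero (hyr : y - x < 2 * r)
    (hx : (x : ℂ) ∈ (thickening r U)ᶜ) (hy : (y : ℂ) ∈ (thickening r U)ᶜ) (ht : t ∈ Icc x y)
    (hlow : lowerEnvelope r U t = 0) (hup : lowerEnvelope r (Complex.conjLIE '' U) t = 0) :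
    (t : ℂ) ∈ (thickening r U)ᶜ ∩ closedBall (x : ℂ) (y - x) ∩ closedBall (y : ℂ) (y - x) := by
  have hr : 0 < r := by linarith [ht.1.trans ht.2]
  rw [mem_compl_thickening_iff] at hx hy
  refine ⟨⟨mem_compl_thickening_iff.2 fun u huU => ?_, ?_⟩, ?_⟩
  · rcases lt_trichotomy u.im 0 with hu | hu | hu
    · exact not_lt.1 fun hlt =>
        ((lt_lowerEnvelope_iff hr le_rfl).2 ⟨u, huU, hu, hlt⟩).ne' hlow
    · exact le_dist_of_im_eq_zero hyr ht le_rfl hu (hx u huU) (hy u huU)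
    · refine not_lt.1 fun hlt =>
        ((lt_lowerEnvelope_image_conj_iff hr le_rfl).2 ⟨u, huU, hu, ?_⟩).ne' hup
      rwa [neg_zero]
  · rw [mem_closedBall, Complex.isometry_ofReal.dist_eq]
    exact Real.dist_le_of_mem_Icc ht (left_mem_Icc.2 (ht.1.trans ht.2))
  · rw [mem_closedBall, Complex.isometry_ofReal.dist_eq]
    exact Real.dist_le_of_mem_Icc ht (right_mem_Icc.2 (ht.1.trans ht.2))

/-- At most one of the two envelopes is positive at `t`, and subtracting them takes whichever
one is needed. -/
theorem mk_lowerEnvelope_sub_mem (hUclosed : IsClosed U) (hU : IsPreconnected U)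
    (hyr : y - x < 2 * r) (hy : (y : ℂ) ∈ connectedComponentIn (thickening r U)ᶜ x)
    (ht : t ∈ Icc x y) :
    (⟨t, lowerEnvelope r U t - lowerEnvelope r (Complex.conjLIE '' U) t⟩ : ℂ) ∈
      (thickening r U)ᶜ ∩ closedBall (x : ℂ) (y - x) ∩ closedBall (y : ℂ) (y - x) := by
  have hxfree := connectedComponentIn_nonempty_iff.1 ⟨_, hy⟩
  have hyfree := connectedComponentIn_subset _ _ hy
  have hlow0 := (lowerEnvelope_nonneg r U t).eq_or_lt'
  have hup0 := (lowerEnvelope_nonneg r (Complex.conjLIE '' U) t).eq_or_lt'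
  rcases lowerEnvelope_eq_zero_or_lowerEnvelope_image_conj_eq_zero hUclosed hU hyr hy ht with
    hlow | hup
  · rw [hlow, zero_sub]
    rcases hup0 with hup | hup
    · rw [hup, neg_zero]
      exact ofReal_mem_of_lowerEnvelope_eq_zero hyr hxfree hyfree ht hlow hup
    · exact mk_neg_lowerEnvelope_image_conj_mem hUclosed hU hyr hy ht hup
  · rw [hup, sub_zero]
    rcases hlow0 with hlow | hlow
    · rw [hlow]
      exact ofReal_mem_of_lowerEnvelope_eq_zero hyr hxfree hyfree ht hlow hup
    · exact mk_lowerEnvelope_mem hUclosed hU hyr hy ht hlow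

theorem joinedIn_of_mem_connectedComponentIn_ofReal (hUclosed : IsClosed U)
    (hU : IsPreconnected U) (hxy : x ≤ y) (hyr : y - x < 2 * r)
    (hy : (y : ℂ) ∈ connectedComponentIn (thickening r U)ᶜ x) :
    JoinedIn ((thickening r U)ᶜ ∩ closedBall (x : ℂ) (y - x) ∩ closedBall (y : ℂ) (y - x)) x y := by
  have hr : 0 < r := by linarith
  have hxfree := connectedComponentIn_nonempty_iff.1 ⟨_, hy⟩
  have hyfree := connectedComponentIn_subset _ _ hy
  have hheight : ∀ z : ℝ, (z : ℂ) ∈ (thickening r U)ᶜ →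
      lowerEnvelope r U z - lowerEnvelope r (Complex.conjLIE '' U) z = 0 := fun z hz => by
    have hconj : (z : ℂ) ∈ (thickening r (Complex.conjLIE '' U))ᶜ :=
      image_compl_thickening_isometryEquiv Complex.conjLIE.toIsometryEquiv r U ▸
        ⟨z, hz, Complex.conj_ofReal z⟩
    rw [lowerEnvelope_eq_zero hr hz, lowerEnvelope_eq_zero hr hconj, sub_zero]
  let f : ℝ → ℂ := fun t =>
    ⟨t, lowerEnvelope r U t - lowerEnvelope r (Complex.conjLIE '' U) t⟩
  have hf : Continuous f := continuous_complex_mk continuous_id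
    ((continuous_lowerEnvelope r U).sub (continuous_lowerEnvelope r _))
  refine .ofLine (f := f ∘ AffineMap.lineMap x y)
    (hf.comp AffineMap.lineMap_continuous).continuousOn ?_ ?_ ?_
  · simp [f, hheight x hxfree, Complex.ext_iff]
  · simp [f, hheight y hyfree, Complex.ext_iff]
  rw [image_comp, ← segment_eq_image_lineMap, segment_eq_Icc hxy]
  rintro _ ⟨t, ht, rfl⟩
  exact mk_lowerEnvelope_sub_mem hUclosed hU hyr hy ht

end PushedSegment

section Exterior

theorem isPreconnected_compl_closedBall {E : Type*} [NormedAddCommGroup E] [NormedSpace ℝ E]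
    (hE : 1 < Module.rank ℝ E) (x : E) (R : ℝ) : IsPreconnected (closedBall x R)ᶜ := by
  rcases lt_or_ge R 0 with hR | hR
  · simpa only [closedBall_eq_empty.2 hR, compl_empty] using isPreconnected_univ
  have hpolar : (fun p : ℝ × E => x + p.1 • p.2) '' (Ioi R ×ˢ sphere (0 : E) 1) =
      (closedBall x R)ᶜ := by
    ext z
    rw [mem_compl_iff, mem_closedBall, not_le, dist_eq_norm]
    constructor
    · rintro ⟨⟨s, u⟩, ⟨hs, hu⟩, rfl⟩
      rwa [add_sub_cancel_left, norm_smul, mem_sphere_zero_iff_norm.1 hu, mul_one,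
        Real.norm_of_nonneg (hR.trans (mem_Ioi.1 hs).le)]
    · intro hz
      have hne : ‖z - x‖ ≠ 0 := (hR.trans_lt hz).ne'
      exact ⟨(‖z - x‖, ‖z - x‖⁻¹ • (z - x)), ⟨hz, by simp [norm_smul, hne]⟩,
        by simp [smul_smul, hne]⟩
  rw [← hpolar]
  exact (isPreconnected_Ioi.prod (isPreconnected_sphere hE 0 1)).image _ (by fun_prop)

theorem isPreconnected_setOf_not_isBounded_connectedComponentIn_compl {E : Type*}
    [NormedAddCommGroup E] [NormedSpace ℝ E] (hE : 1 < Module.rank ℝ E) {K : Set E}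
    (hK : Bornology.IsBounded K) :
    IsPreconnected {z | ¬Bornology.IsBounded (connectedComponentIn Kᶜ z)} := by
  obtain ⟨R, hR⟩ := hK.subset_closedBall 0
  have hfar : ∀ z, ¬Bornology.IsBounded (connectedComponentIn Kᶜ z) →
      ∃ w ∈ connectedComponentIn Kᶜ z, w ∉ closedBall 0 R := fun z hz =>
    not_subset.1 fun hsub => hz (isBounded_closedBall.subset hsub)
  refine isPreconnected_of_forall_pair fun a ha b hb => ?_
  obtain ⟨w, hwa, hw⟩ := hfar a ha
  obtain ⟨v, hvb, hv⟩ := hfar b hb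
  have hvw : v ∈ connectedComponentIn Kᶜ w :=
    (isPreconnected_compl_closedBall hE 0 R).subset_connectedComponentIn hw
      (compl_subset_compl.2 hR) hv
  have hab : connectedComponentIn Kᶜ a = connectedComponentIn Kᶜ b := by
    rw [connectedComponentIn_eq hwa, connectedComponentIn_eq hvw, connectedComponentIn_eq hvb]
  have hmem : ∀ {c d}, d ∈ connectedComponentIn Kᶜ c → c ∈ connectedComponentIn Kᶜ c :=
    fun h => mem_connectedComponentIn (connectedComponentIn_nonempty_iff.1 ⟨_, h⟩)
  refine ⟨connectedComponentIn Kᶜ a, fun z hz => ?_, hmem hwa, hab ▸ hmem hvb,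
    isPreconnected_connectedComponentIn⟩
  rw [mem_ofPred_eq, ← connectedComponentIn_eq hz]
  exact ha

theorem SimplePolygon.compl_region (P : SimplePolygon) :
    P.regionᶜ = {z | ¬Bornology.IsBounded (connectedComponentIn P.bdryCurveᶜ z)} := by
  ext z
  by_cases hz : z ∈ P.bdryCurve
  · simp [SimplePolygon.region, hz, connectedComponentIn_eq_empty]
  · simp [SimplePolygon.region, hz]

theorem SimplePolygon.isPreconnected_compl_region (P : SimplePolygon) :
    IsPreconnected P.regionᶜ := by
  rw [P.compl_region]
  exact isPreconnected_setOf_not_isBounded_connectedComponentIn_compl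
    (Module.lt_rank_of_lt_finrank (by simp)) (isCompact_Icc.image P.continuous).isBounded

theorem SimplePolygon.freeSpace_eq_compl_thickening (P : SimplePolygon) :
    P.freeSpace = (thickening 1 P.regionᶜ)ᶜ := by
  ext z
  rw [mem_compl_thickening_iff]
  refine forall_congr' fun u => ?_
  rw [mem_ball', ← not_imp_not, not_lt]
  rfl

end Exterior

theorem exists_isometryEquiv_complex {E : Type*} [NormedAddCommGroup E] [InnerProductSpace ℝ E]
    (hE : Module.finrank ℝ E = 2) (x y : E) :
    ∃ T : E ≃ᵢ ℂ, T x = 0 ∧ T y = (dist x y : ℝ) := by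
  have : FiniteDimensional ℝ E := .of_finrank_pos (by omega)
  let φ : E ≃ₗᵢ[ℝ] ℂ :=
    (Complex.isometryOfOrthonormal ((stdOrthonormalBasis ℝ E).reindex (finCongr hE))).symm
  obtain ⟨a, ha⟩ : ∃ a : Circle, (a : ℂ) * (φ y - φ x) = (‖φ y - φ x‖ : ℝ) := by
    refine ⟨Circle.exp (-(φ y - φ x).arg), ?_⟩
    conv_lhs => rw [← Complex.norm_mul_exp_arg_mul_I (φ y - φ x)]
    rw [Circle.coe_exp, mul_left_comm, ← Complex.exp_add]
    simp
  have hnorm : ‖φ y - φ x‖ = dist x y := by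
    rw [← map_sub, φ.norm_map, ← dist_eq_norm, dist_comm]
  refine ⟨(φ.toIsometryEquiv.trans (IsometryEquiv.subRight (φ x))).trans
    (rotation a).toIsometryEquiv, by simp, ?_⟩
  rw [← hnorm, ← ha]
  simp

theorem path_within_both_auras_general {E : Type*} [NormedAddCommGroup E] [InnerProductSpace ℝ E]
    (hE : Module.finrank ℝ E = 2) {U : Set E} (hU : IsPreconnected U) {r : ℝ} {x y : E}
    (hy : y ∈ connectedComponentIn (thickening r U)ᶜ x) (hxy : dist x y < 2 * r) :
    JoinedIn ((thickening r U)ᶜ ∩ closedBall x (dist x y) ∩ closedBall y (dist x y)) x y := by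
  obtain ⟨T, hTx, hTy⟩ := exists_isometryEquiv_complex hE x y
  have hTconn := map_mem_connectedComponentIn_compl_thickening T hy
  have hjoin := joinedIn_of_mem_connectedComponentIn_ofReal (U := closure (T '' U)) (r := r)
    (x := 0) (y := dist x y) isClosed_closure
    (hU.image T T.continuous.continuousOn).closure dist_nonneg (by rwa [sub_zero])
    (by rwa [thickening_closure, Complex.ofReal_zero, ← hTx, ← hTy])
  rw [thickening_closure, sub_zero, Complex.ofReal_zero, ← hTx, ← hTy,
    ← image_compl_thickening_inter_closedBall_isometryEquiv] at hjoin
  simpa only [T.symm_apply_apply, image_image, image_id'] using hjoin.map T.symm.continuous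

/-- For distinct points `x, y` in the same connected component of the free space with
`dist x y < 2`, there is a path from `x` to `y` inside `F ∩ D₂(x) ∩ D₂(y)`. -/
theorem path_within_both_auras (P : SimplePolygon) (x y : Plane)
    (hx : x ∈ P.freeSpace) (hy : y ∈ connectedComponentIn P.freeSpace x)
    (hxy : x ≠ y) (hdist : dist x y < 2) :
    ∃ π : unitInterval → Plane, Continuous π ∧ π 0 = x ∧ π 1 = y ∧
      ∀ τ, π τ ∈ P.freeSpace ∩ Metric.ball x 2 ∩ Metric.ball y 2 := by
  rw [P.freeSpace_eq_compl_thickening] at hy ⊢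
  obtain ⟨γ, hγ⟩ := path_within_both_auras_general finrank_euclideanSpace_fin
    P.isPreconnected_compl_region hy (by rwa [mul_one])
  refine ⟨γ, γ.continuous, γ.source, γ.target, fun τ => ?_⟩
  obtain ⟨⟨hfree, hτx⟩, hτy⟩ := hγ τ
  exact ⟨⟨hfree, closedBall_subset_ball hdist hτx⟩, closedBall_subset_ball hdist hτy⟩
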